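/- arXiv:2510.19961 — 2 statements merged into one kernel-verified Lean document; each statement's English description precedes it below -/
import Mathlib

section
/- Let (Q,·,e) be a loop with central squares, i.e., x·x ∈ Z(Q) for all x ∈ Q. Then Q has the automorphic inverse property ((x·y)^r = x^r·y^r for all x,y) if and only if the squaring map s : Q → Q, s(x) = x·x, is an endomorphism of (Q,·) (i.e., (x·y)·(x·y) = (x·x)·(y·y) for all x,y). -/
/-- A loop `(Q, ·, e)`: a quasigroup with two-sided identity, presented with
explicit left division `ldiv a b = a \ b` and right division `rdiv b a = b / a`. -/
structure LoopStr (Q : Type*) where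
  mul : Q → Q → Q
  e : Q
  ldiv : Q → Q → Q
  rdiv : Q → Q → Q
  one_mul : ∀ x, mul e x = x
  mul_one : ∀ x, mul x e = x
  mul_ldiv : ∀ a b, mul a (ldiv a b) = b
  ldiv_mul : ∀ a b, ldiv a (mul a b) = b
  rdiv_mul : ∀ a b, mul (rdiv b a) a = b
  mul_rdiv : ∀ a b, rdiv (mul b a) a = b

namespace LoopStr

variable {Q : Type*} (S : LoopStr Q)

/-- The left inverse `x^ℓ = e / x`. -/
def linv (x : Q) : Q := S.rdiv S.e x

/-- The right inverse `x^r = x \ e`. -/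
def rinv (x : Q) : Q := S.ldiv x S.e

/-- The left nucleus. -/
def lnuc : Set Q := {a | ∀ x y, S.mul (S.mul a x) y = S.mul a (S.mul x y)}

/-- The middle nucleus. -/
def mnuc : Set Q := {a | ∀ x y, S.mul (S.mul x a) y = S.mul x (S.mul a y)}

/-- The right nucleus. -/
def rnuc : Set Q := {a | ∀ x y, S.mul (S.mul x y) a = S.mul x (S.mul y a)}

/-- The commutant `C(Q)`. -/
def commutant : Set Q := {a | ∀ x, S.mul a x = S.mul x a}

/-- The center `Z(Q) = C(Q) ∩ Nuc_ℓ ∩ Nuc_m ∩ Nuc_r`. -/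
def center : Set Q := S.commutant ∩ S.lnuc ∩ S.mnuc ∩ S.rnuc

/-- The left translation `L_a` as a map. -/
def leftMul (a : Q) : Q → Q := fun x => S.mul a x

/-- The left translation `L_a` as a permutation of `Q`. -/
def leftPerm (a : Q) : Equiv.Perm Q :=
  ⟨fun x => S.mul a x, fun x => S.ldiv a x, S.ldiv_mul a, S.mul_ldiv a⟩

/-- The right translation `R_a` as a permutation of `Q`. -/
def rightPerm (a : Q) : Equiv.Perm Q :=
  ⟨fun x => S.mul x a, fun x => S.rdiv x a, fun x => S.mul_rdiv a x, fun x => S.rdiv_mul a x⟩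

/-- The multiplication group `Mlt(Q) = ⟨L_x, R_x : x ∈ Q⟩ ≤ Sym(Q)`. -/
def Mlt : Subgroup (Equiv.Perm Q) :=
  Subgroup.closure (Set.range S.leftPerm ∪ Set.range S.rightPerm)

/-- `x^n = L_x^n(e)` for natural `n`. -/
def npow (a : Q) (n : ℕ) : Q := (S.leftPerm a ^ n) S.e

/-- `x^n = L_x^n(e)` for integer `n`. -/
def zpow (a : Q) (n : ℤ) : Q := (S.leftPerm a ^ n) S.e

/-- The order of an element: the least `n > 0` with `x^n = e` (or `0` if none exists). -/
noncomputable def lorder (a : Q) : ℕ := sInf {n : ℕ | 0 < n ∧ S.npow a n = S.e}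

/-- A subloop: contains `e`, closed under multiplication and both divisions. -/
def IsSubloop (N : Set Q) : Prop :=
  S.e ∈ N ∧ (∀ a ∈ N, ∀ b ∈ N, S.mul a b ∈ N) ∧
    (∀ a ∈ N, ∀ b ∈ N, S.ldiv a b ∈ N) ∧ (∀ a ∈ N, ∀ b ∈ N, S.rdiv a b ∈ N)

/-- A normal subloop: a subloop with `xN = Nx`, `(xN)y = x(Ny)`, `N(xy) = (Nx)y`
elementwise as sets. -/
def IsNormalSubloop (N : Set Q) : Prop :=
  S.IsSubloop N ∧
  (∀ x : Q, (fun a => S.mul x a) '' N = (fun a => S.mul a x) '' N) ∧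
  (∀ x y : Q, (fun a => S.mul (S.mul x a) y) '' N = (fun a => S.mul x (S.mul a y)) '' N) ∧
  (∀ x y : Q, (fun a => S.mul a (S.mul x y)) '' N = (fun a => S.mul (S.mul a x) y) '' N)

/-- A loop is simple if its only normal subloops are `{e}` and `Q`. -/
def IsSimple : Prop :=
  ∀ N : Set Q, S.IsNormalSubloop N → N = {S.e} ∨ N = Set.univ

lemma mul_rinv (x : Q) : S.mul x (S.rinv x) = S.e := S.mul_ldiv x S.e

lemma linv_mul (x : Q) : S.mul (S.linv x) x = S.e := S.rdiv_mul x S.e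

lemma linv_rinv (x : Q) : S.linv (S.rinv x) = x := by
  have h := S.mul_rdiv (S.rinv x) x
  rw [S.mul_rinv] at h
  exact h

lemma rinv_linv (x : Q) : S.rinv (S.linv x) = x := by
  have h := S.ldiv_mul (S.linv x) x
  rw [S.linv_mul] at h
  exact h

lemma rinv_e : S.rinv S.e = S.e := by
  have h := S.ldiv_mul S.e S.e
  rw [S.one_mul] at h
  exact h

lemma rdiv_e (x : Q) : S.rdiv x S.e = x := by
  have h := S.mul_rdiv S.e x
  rw [S.mul_one] at h
  exact h

/-- The principal right isostrophe `(Q, ∘)` of `(Q, ·)`, with `x ∘ y = x / (y^r)`,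
right division `x // y = x·(y^r)` and left division `x \\ y = (y \ x)^ℓ`. -/
def iso : LoopStr Q where
  mul x y := S.rdiv x (S.rinv y)
  e := S.e
  ldiv x y := S.linv (S.ldiv y x)
  rdiv x y := S.mul x (S.rinv y)
  one_mul x := S.linv_rinv x
  mul_one x := by
    show S.rdiv x (S.rinv S.e) = x
    rw [S.rinv_e, S.rdiv_e]
  mul_ldiv a b := by
    show S.rdiv a (S.rinv (S.linv (S.ldiv b a))) = b
    rw [S.rinv_linv]
    have h := S.mul_rdiv (S.ldiv b a) b
    rw [S.mul_ldiv] at h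
    exact h
  ldiv_mul a b := by
    show S.linv (S.ldiv (S.rdiv a (S.rinv b)) a) = b
    have h := S.ldiv_mul (S.rdiv a (S.rinv b)) (S.rinv b)
    rw [S.rdiv_mul] at h
    rw [h, S.linv_rinv]
  rdiv_mul a b := by
    show S.rdiv (S.mul b (S.rinv a)) (S.rinv a) = b
    exact S.mul_rdiv (S.rinv a) b
  mul_rdiv a b := by
    show S.mul (S.rdiv b (S.rinv a)) (S.rinv a) = b
    exact S.rdiv_mul (S.rinv a) b

end LoopStr

/-!
If `x²` is central, then `x = x² · x^r`. Expanding `x · y` in two ways gives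
`(x · y)² · (x · y)^r = (x² · y²) · (x^r · y^r)`, so by cancellation the left factors agree if and
only if the right factors do.
-/

namespace LoopStr

variable {Q : Type*} (S : LoopStr Q)

lemma mul_left_cancel_iff {a b c : Q} : S.mul a b = S.mul a c ↔ b = c :=
  (S.leftPerm a).injective.eq_iff

lemma mul_right_cancel_iff {a b c : Q} : S.mul b a = S.mul c a ↔ b = c :=
  (S.rightPerm a).injective.eq_iff

lemma eq_iff_eq_of_mul_eq_mul {a b c d : Q} (h : S.mul a b = S.mul c d) : a = c ↔ b = d := by
  constructor
  · rintro rfl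
    exact S.mul_left_cancel_iff.mp h
  · rintro rfl
    exact S.mul_right_cancel_iff.mp h

lemma mul_mul_mul_comm_of_mem_lnuc_of_mem_center {a c : Q} (ha : a ∈ S.lnuc)
    (hc : c ∈ S.center) (b d : Q) :
    S.mul (S.mul a b) (S.mul c d) = S.mul (S.mul a c) (S.mul b d) := by
  obtain ⟨⟨⟨c_comm, c_left⟩, c_middle⟩, -⟩ := hc
  calc S.mul (S.mul a b) (S.mul c d)
    _ = S.mul a (S.mul b (S.mul c d)) := ha _ _
    _ = S.mul a (S.mul (S.mul b c) d) := by rw [c_middle]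
    _ = S.mul a (S.mul (S.mul c b) d) := by rw [c_comm]
    _ = S.mul a (S.mul c (S.mul b d)) := by rw [c_left]
    _ = S.mul (S.mul a c) (S.mul b d) := (ha _ _).symm

lemma mul_rinv_eq_ldiv_of_mem_center {c : Q} (hc : c ∈ S.center) (x : Q) :
    S.mul c (S.rinv x) = S.ldiv x c := by
  obtain ⟨⟨⟨c_comm, c_left⟩, c_middle⟩, -⟩ := hc
  rw [← S.mul_left_cancel_iff (a := x)]
  calc S.mul x (S.mul c (S.rinv x))
    _ = S.mul (S.mul x c) (S.rinv x) := (c_middle _ _).symm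
    _ = S.mul (S.mul c x) (S.rinv x) := by rw [c_comm]
    _ = S.mul c (S.mul x (S.rinv x)) := c_left _ _
    _ = c := by rw [S.mul_rinv, S.mul_one]
    _ = S.mul x (S.ldiv x c) := (S.mul_ldiv x c).symm

lemma sq_mul_rinv_of_sq_mem_center {x : Q} (hx : S.mul x x ∈ S.center) :
    S.mul (S.mul x x) (S.rinv x) = x := by
  rw [S.mul_rinv_eq_ldiv_of_mem_center hx, S.ldiv_mul]

lemma rinv_mul_eq_iff_sq_mul_eq {x y : Q} (hx : S.mul x x ∈ S.center)
    (hy : S.mul y y ∈ S.center) (hxy : S.mul (S.mul x y) (S.mul x y) ∈ S.center) :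
    S.rinv (S.mul x y) = S.mul (S.rinv x) (S.rinv y) ↔
      S.mul (S.mul x y) (S.mul x y) = S.mul (S.mul x x) (S.mul y y) := by
  have hx_left : S.mul x x ∈ S.lnuc := hx.1.1.2
  refine (S.eq_iff_eq_of_mul_eq_mul ?_).symm
  calc S.mul (S.mul (S.mul x y) (S.mul x y)) (S.rinv (S.mul x y))
    _ = S.mul x y := S.sq_mul_rinv_of_sq_mem_center hxy
    _ = S.mul (S.mul (S.mul x x) (S.rinv x)) (S.mul (S.mul y y) (S.rinv y)) := by
      rw [S.sq_mul_rinv_of_sq_mem_center hx, S.sq_mul_rinv_of_sq_mem_center hy]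
    _ = S.mul (S.mul (S.mul x x) (S.mul y y)) (S.mul (S.rinv x) (S.rinv y)) :=
      S.mul_mul_mul_comm_of_mem_lnuc_of_mem_center hx_left hy _ _

end LoopStr

/-- A loop with central squares has the automorphic inverse property
iff the squaring map `x ↦ x·x` is an endomorphism. -/
theorem central_squares_aip_iff_sq_endo {Q : Type*} (S : LoopStr Q)
    (h : ∀ x : Q, S.mul x x ∈ S.center) :
    (∀ x y : Q, S.rinv (S.mul x y) = S.mul (S.rinv x) (S.rinv y)) ↔
    (∀ x y : Q, S.mul (S.mul x y) (S.mul x y) = S.mul (S.mul x x) (S.mul y y)) :=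
  forall₂_congr fun x y => S.rinv_mul_eq_iff_sq_mul_eq (h x) (h y) (h (S.mul x y))
end

section
/- Let (Q,·,e) be a left C loop, i.e., a loop satisfying x·(x·(y·z)) = ((x·x)·y)·z for all x,y,z, and let N = Nuc_ℓ(Q). Then the set {L_a : a ∈ N} is a normal subgroup of the multiplication group Mlt(Q) = ⟨L_x, R_x : x ∈ Q⟩, and N is a normal subloop of Q. -/
/-!
The left translations by `Nuc_ℓ(Q)` are exactly the permutations commuting with every right
translation, so they form a group `C`, which all `R_x` normalize. For `p ∈ C` we have
`p L_x = L_{p x}`, and the left C identity puts the square of every left translation in `C`.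
Hence `L_x p L_x⁻¹ = p⁻¹ (p L_x)² L_x⁻²` lies in `C`, and `Mlt(Q)` normalizes `C`.
Writing `L_x L_a = p L_x` with `p ∈ C` then gives `x·a = p(e)·x` and
`(x·a)·y = p(x)·y = p(x·y) = x·(a·y)` for `a ∈ Nuc_ℓ(Q)`.
-/

theorem mem_normalizer_of_forall_mul_sq_mem {G : Type*} [Group G] {H : Subgroup G} {g : G}
    (hHg : ∀ h ∈ H, (h * g) ^ 2 ∈ H) : g ∈ Subgroup.normalizer (H : Set G) := by
  have hg : g ^ 2 ∈ H := by simpa only [one_mul] using hHg 1 (one_mem H)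
  have conj_mem {h : G} (hh : h ∈ H) : g * h * g⁻¹ ∈ H := by
    have eq : g * h * g⁻¹ = h⁻¹ * (h * g) ^ 2 * (g ^ 2)⁻¹ := by
      simp only [sq]; group
    exact eq ▸ mul_mem (mul_mem (inv_mem hh) (hHg h hh)) (inv_mem hg)
  refine Subgroup.mem_normalizer_iff.2 fun h => ⟨conj_mem, fun hh => ?_⟩
  have eq : h = (g ^ 2)⁻¹ * (g * (g * h * g⁻¹) * g⁻¹) * g ^ 2 := by group
  exact eq ▸ mul_mem (mul_mem (inv_mem hg) (conj_mem hh)) hg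

namespace LoopStr

variable {Q : Type*} (S : LoopStr Q)

lemma leftPerm_apply (x y : Q) : S.leftPerm x y = S.mul x y := rfl

lemma leftPerm_inv_apply (x y : Q) : (S.leftPerm x)⁻¹ y = S.ldiv x y := rfl

lemma leftPerm_e : S.leftPerm S.e = 1 := Equiv.ext S.one_mul

lemma ldiv_self (x : Q) : S.ldiv x x = S.e := by
  simpa only [S.mul_one] using S.ldiv_mul x S.e

lemma leftPerm_mem_Mlt (x : Q) : S.leftPerm x ∈ S.Mlt :=
  Subgroup.subset_closure (Or.inl ⟨x, rfl⟩)

/-- The centralizer of the right translations in `Sym(Q)`. It is the group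
`{L_a : a ∈ Nuc_ℓ(Q)}`, see `image_leftPerm_lnuc`. -/
def rightCentralizer : Subgroup (Equiv.Perm Q) :=
  Subgroup.centralizer (Set.range S.rightPerm)

section RightCentralizer

variable {S}

lemma mem_rightCentralizer_iff {p : Equiv.Perm Q} :
    p ∈ S.rightCentralizer ↔ ∀ x y, S.mul (p x) y = p (S.mul x y) := by
  simp only [rightCentralizer, Subgroup.mem_centralizer_iff, Set.forall_mem_range, Equiv.ext_iff]
  exact forall_comm

lemma leftPerm_mem_rightCentralizer_iff {a : Q} :
    S.leftPerm a ∈ S.rightCentralizer ↔ a ∈ S.lnuc :=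
  mem_rightCentralizer_iff

variable {p : Equiv.Perm Q} (hp : p ∈ S.rightCentralizer)
include hp

lemma apply_e_mul (x : Q) : S.mul (p S.e) x = p x := by
  rw [mem_rightCentralizer_iff.1 hp, S.one_mul]

lemma mul_leftPerm (x : Q) : p * S.leftPerm x = S.leftPerm (p x) :=
  Equiv.ext fun y => (mem_rightCentralizer_iff.1 hp x y).symm

lemma leftPerm_apply_e : S.leftPerm (p S.e) = p := by
  rw [← mul_leftPerm hp, S.leftPerm_e, _root_.mul_one]

lemma apply_e_mem_lnuc : p S.e ∈ S.lnuc := by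
  rwa [← leftPerm_mem_rightCentralizer_iff, leftPerm_apply_e hp]

end RightCentralizer

theorem image_leftPerm_lnuc :
    S.leftPerm '' S.lnuc = (S.rightCentralizer : Set (Equiv.Perm Q)) := by
  refine Set.Subset.antisymm ?_ fun p hp => ⟨p S.e, apply_e_mem_lnuc hp, leftPerm_apply_e hp⟩
  rintro _ ⟨a, ha, rfl⟩
  exact leftPerm_mem_rightCentralizer_iff.2 ha

theorem isSubloop_lnuc : S.IsSubloop S.lnuc := by
  refine ⟨fun x y => by rw [S.one_mul, S.one_mul], fun a ha b hb x y => by rw [ha, ha, ha, hb],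
    fun a ha b hb => ?_, fun a ha b hb => ?_⟩
  all_goals rw [← leftPerm_mem_rightCentralizer_iff] at ha hb
  · have h := apply_e_mem_lnuc (mul_mem (inv_mem ha) hb)
    rwa [Equiv.Perm.mul_apply, leftPerm_inv_apply, leftPerm_apply, S.mul_one] at h
  · have hp := mul_mem ha (inv_mem hb)
    have hpb : S.mul ((S.leftPerm a * (S.leftPerm b)⁻¹) S.e) b = a := by
      rw [apply_e_mul hp, Equiv.Perm.mul_apply, leftPerm_inv_apply, S.ldiv_self, leftPerm_apply,
        S.mul_one]
    rw [← hpb, S.mul_rdiv]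
    exact apply_e_mem_lnuc hp

lemma rightPerm_mem_normalizer (x : Q) :
    S.rightPerm x ∈ Subgroup.normalizer (S.rightCentralizer : Set (Equiv.Perm Q)) := by
  have hx : S.rightPerm x ∈ Subgroup.centralizer (S.rightCentralizer : Set (Equiv.Perm Q)) :=
    Set.subset_centralizer_centralizer (Set.mem_range_self x)
  exact Subgroup.centralizer_le_normalizer _ hx

theorem Mlt_le_normalizer
    (h : ∀ x, S.leftPerm x ∈ Subgroup.normalizer (S.rightCentralizer : Set (Equiv.Perm Q))) :
    S.Mlt ≤ Subgroup.normalizer (S.rightCentralizer : Set (Equiv.Perm Q)) :=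
  (Subgroup.closure_le _).2 <| Set.union_subset (Set.range_subset_iff.2 h)
    (Set.range_subset_iff.2 S.rightPerm_mem_normalizer)

section Normalizer

variable {S} {x : Q}
  (hx : S.leftPerm x ∈ Subgroup.normalizer (S.rightCentralizer : Set (Equiv.Perm Q)))
include hx

lemma mul_assoc_of_mem_normalizer {a : Q} (ha : a ∈ S.lnuc) (y : Q) :
    S.mul (S.mul x a) y = S.mul x (S.mul a y) := by
  set p := S.leftPerm x * S.leftPerm a * (S.leftPerm x)⁻¹ with p_def
  have hp : p ∈ S.rightCentralizer :=
    (Subgroup.mem_normalizer_iff.1 hx _).1 (leftPerm_mem_rightCentralizer_iff.2 ha)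
  have apply_mul (z : Q) : p (S.mul x z) = S.mul x (S.mul a z) := by
    simp only [p_def, Equiv.Perm.mul_apply, leftPerm_inv_apply, leftPerm_apply, S.ldiv_mul]
  calc S.mul (S.mul x a) y = S.mul (p x) y := by
        rw [← S.mul_one x, apply_mul, S.mul_one, S.mul_one]
    _ = p (S.mul x y) := mem_rightCentralizer_iff.1 hp x y
    _ = S.mul x (S.mul a y) := apply_mul y

lemma image_mul_left_lnuc_eq_image_mul_right :
    (fun a => S.mul x a) '' S.lnuc = (fun a => S.mul a x) '' S.lnuc := by
  apply Set.Subset.antisymm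
  · rintro _ ⟨a, ha, rfl⟩
    have hp := (Subgroup.mem_normalizer_iff.1 hx _).1 (leftPerm_mem_rightCentralizer_iff.2 ha)
    refine ⟨_, apply_e_mem_lnuc hp, (apply_e_mul hp x).trans ?_⟩
    simp only [Equiv.Perm.mul_apply, leftPerm_inv_apply, leftPerm_apply, S.ldiv_self, S.mul_one]
  · rintro _ ⟨a, ha, rfl⟩
    have hp := (Subgroup.mem_normalizer_iff''.1 hx _).1 (leftPerm_mem_rightCentralizer_iff.2 ha)
    refine ⟨_, apply_e_mem_lnuc hp, ?_⟩
    simp only [Equiv.Perm.mul_apply, leftPerm_inv_apply, leftPerm_apply, S.mul_ldiv, S.mul_one]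

end Normalizer

theorem isNormalSubloop_lnuc
    (h : ∀ x, S.leftPerm x ∈ Subgroup.normalizer (S.rightCentralizer : Set (Equiv.Perm Q))) :
    S.IsNormalSubloop S.lnuc :=
  ⟨S.isSubloop_lnuc, fun x => image_mul_left_lnuc_eq_image_mul_right (h x),
    fun x y => Set.image_congr fun _ ha => mul_assoc_of_mem_normalizer (h x) ha y,
    fun x y => Set.image_congr fun _ ha => (ha x y).symm⟩

/-- A left C loop, defined by the identity `x·(x·(y·z)) = ((x·x)·y)·z`. -/
def IsLeftC : Prop :=
  ∀ x y z : Q, S.mul x (S.mul x (S.mul y z)) = S.mul (S.mul (S.mul x x) y) z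

namespace IsLeftC

variable {S} (hS : S.IsLeftC)
include hS

lemma mul_self_mul (x y : Q) : S.mul (S.mul x x) y = S.mul x (S.mul x y) := by
  simpa only [S.mul_one] using (hS x y S.e).symm

lemma leftPerm_sq_mem_rightCentralizer (x : Q) : S.leftPerm x ^ 2 ∈ S.rightCentralizer := by
  refine mem_rightCentralizer_iff.2 fun y z => ?_
  simp only [sq, Equiv.Perm.mul_apply, leftPerm_apply]
  rw [hS, hS.mul_self_mul]

theorem leftPerm_mem_normalizer (x : Q) :
    S.leftPerm x ∈ Subgroup.normalizer (S.rightCentralizer : Set (Equiv.Perm Q)) := by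
  refine mem_normalizer_of_forall_mul_sq_mem fun p hp => ?_
  rw [mul_leftPerm hp]
  exact hS.leftPerm_sq_mem_rightCentralizer (p x)

end IsLeftC

end LoopStr

/-- In a left C loop (`x·(x·(y·z)) = ((x·x)·y)·z`), with
`N = Nuc_ℓ(Q)`, the set `{L_a : a ∈ N}` is a normal subgroup of `Mlt(Q)`
(it is contained in `Mlt(Q)`, contains the identity, is closed under
multiplication and inverses, and is invariant under conjugation by elements of
`Mlt(Q)`), and `N` is a normal subloop of `Q`. -/
theorem leftC_lnuc_normal {Q : Type*} (S : LoopStr Q)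
    (hLC : ∀ x y z : Q, S.mul x (S.mul x (S.mul y z)) = S.mul (S.mul (S.mul x x) y) z) :
    (S.leftPerm '' S.lnuc ⊆ (S.Mlt : Set (Equiv.Perm Q))) ∧
    (1 : Equiv.Perm Q) ∈ S.leftPerm '' S.lnuc ∧
    (∀ p ∈ S.leftPerm '' S.lnuc, ∀ q ∈ S.leftPerm '' S.lnuc,
      p * q ∈ S.leftPerm '' S.lnuc) ∧
    (∀ p ∈ S.leftPerm '' S.lnuc, p⁻¹ ∈ S.leftPerm '' S.lnuc) ∧
    (∀ g ∈ S.Mlt, ∀ p ∈ S.leftPerm '' S.lnuc, g * p * g⁻¹ ∈ S.leftPerm '' S.lnuc) ∧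
    S.IsNormalSubloop S.lnuc := by
  have hS : S.IsLeftC := hLC
  have subset_Mlt : S.leftPerm '' S.lnuc ⊆ S.Mlt :=
    Set.image_subset_iff.2 fun a _ => S.leftPerm_mem_Mlt a
  have normal := S.Mlt_le_normalizer hS.leftPerm_mem_normalizer
  refine ⟨subset_Mlt, ?_⟩
  rw [S.image_leftPerm_lnuc]
  exact ⟨one_mem _, fun _ hp _ hq => mul_mem hp hq, fun _ hp => inv_mem hp,
    fun _ hg p hp => (Subgroup.mem_normalizer_iff.1 (normal hg) p).1 hp,
    S.isNormalSubloop_lnuc hS.leftPerm_mem_normalizer⟩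
end
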